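/- For all integers m, n ≥ 1, χ_la(P_{2m} ∨ K_{2n}) = 2n + 2. -/

import Mathlib

open Finset SimpleGraph
open scoped Classical

/-- The induced vertex label (weight) of `x`: the sum of `f` over all edges incident to `x`. -/
noncomputable def vertexWeight {V : Type*} [Fintype V] (G : SimpleGraph V)
    (f : Sym2 V → ℕ) (x : V) : ℕ :=
  ∑ e ∈ G.edgeFinset.filter (fun e => x ∈ e), f e

/-- `f` is a local antimagic labeling of `G`: it restricts to a bijection from the edge set of
`G` onto `{1, …, q}` (where `q` is the number of edges), and adjacent vertices get distinct
induced vertex labels. -/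
def IsLocalAntimagic {V : Type*} [Fintype V] (G : SimpleGraph V) (f : Sym2 V → ℕ) : Prop :=
  Set.BijOn f G.edgeSet (Set.Icc 1 G.edgeSet.ncard) ∧
  ∀ ⦃x y : V⦄, G.Adj x y → vertexWeight G f x ≠ vertexWeight G f y

/-- The number of distinct induced vertex labels, `c(f)`. -/
noncomputable def colorCount {V : Type*} [Fintype V] (G : SimpleGraph V)
    (f : Sym2 V → ℕ) : ℕ :=
  (Finset.univ.image (vertexWeight G f)).card

/-- The local antimagic chromatic number `χ_la(G)`. -/
noncomputable def chiLA {V : Type*} [Fintype V] (G : SimpleGraph V) : ℕ :=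
  sInf { n | ∃ f : Sym2 V → ℕ, IsLocalAntimagic G f ∧ colorCount G f = n }

/-- The join `G ∨ H` of two vertex-disjoint graphs. -/
def joinG {α β : Type*} (G : SimpleGraph α) (H : SimpleGraph β) : SimpleGraph (α ⊕ β) :=
  SimpleGraph.fromRel (fun x y =>
    (∃ a b, x = Sum.inl a ∧ y = Sum.inl b ∧ G.Adj a b) ∨
    (∃ a b, x = Sum.inr a ∧ y = Sum.inr b ∧ H.Adj a b) ∨
    (∃ a b, x = Sum.inl a ∧ y = Sum.inr b))

/-- Position of path vertex `r` in the cyclic chain of rows. -/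
def laRho (m r : ℕ) : ℕ := if r % 2 = 0 then r / 2 else 2 * m - 1 - r / 2

/-- Cyclic shift of `0, …, m`, identity on larger numbers. -/
def laTau (m p : ℕ) : ℕ := if p < m then p + 1 else if p = m then 0 else p

/-- The permutation of rows used in column `J`. -/
def laG (m n r J : ℕ) : ℕ :=
  if J < n then laRho m r else if J + 1 < 2 * n then 2 * m - 1 - laRho m r
  else 2 * m - 1 - laTau m (laRho m r)

/-- Labels of the cross edges. -/
def laX (m n r J : ℕ) : ℕ := 2 * m + 2 * m * J + laG m n r J

/-- Label of the path edge `r, r+1`. -/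
def laP (m r : ℕ) : ℕ := if r % 2 = 0 then 2 * m - 1 - r / 2 else r / 2 + 1

/-- Triangular numbers. -/
def laTri : ℕ → ℕ
  | 0 => 0
  | j + 1 => laTri j + j

/-- Labels of the edges of the complete graph. -/
def laK (m n i j : ℕ) : ℕ := 2 * m + 4 * m * n + laTri (max i j) + min i j

theorem laRho_lt {m r : ℕ} (h : r < 2 * m) : laRho m r < 2 * m := by
  unfold laRho; split_ifs <;> omega

theorem laRho_inj {m r s : ℕ} (h : r < 2 * m) (h' : s < 2 * m) (e : laRho m r = laRho m s) :
    r = s := by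
  unfold laRho at e; split_ifs at e <;> omega

theorem laTau_lt {m r : ℕ} (h : r < 2 * m) : laTau m r < 2 * m := by
  unfold laTau; split_ifs <;> omega

theorem laTau_inj {m r s : ℕ} (e : laTau m r = laTau m s) : r = s := by
  unfold laTau at e; split_ifs at e <;> omega

theorem laG_lt {m n r J : ℕ} (h : r < 2 * m) : laG m n r J < 2 * m := by
  have := laRho_lt h
  unfold laG; split_ifs <;> omega

theorem laG_inj {m n r s J : ℕ} (h : r < 2 * m) (h' : s < 2 * m)
    (e : laG m n r J = laG m n s J) : r = s := by
  have h1 := laRho_lt h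
  have h2 := laRho_lt h'
  have h3 := laTau_lt h1
  have h4 := laTau_lt h2
  apply laRho_inj h h'
  unfold laG at e; split_ifs at e
  · exact e
  · omega
  · apply laTau_inj (m := m); omega

theorem laG_surj {m n J t : ℕ} (h : t < 2 * m) : ∃ r < 2 * m, laG m n r J = t := by
  let φ : Fin (2 * m) → Fin (2 * m) := fun r => ⟨laG m n r J, laG_lt r.2⟩
  have hi : Function.Injective φ := by
    intro a b e
    exact Fin.ext (laG_inj a.2 b.2 (by simpa [φ] using e))
  obtain ⟨r, hr⟩ := (Finite.injective_iff_surjective.1 hi) ⟨t, h⟩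
  exact ⟨r, r.2, by simpa [φ] using congrArg Fin.val hr⟩

theorem laTri_mono {a b : ℕ} (h : a ≤ b) : laTri a ≤ laTri b := by
  induction h with
  | refl => exact le_rfl
  | step _ ih => exact ih.trans (by simp [laTri])

theorem laTri_lt {i j k : ℕ} (h : i < j) (hk : j < k) : laTri j + i < laTri k := by
  have := laTri_mono (Nat.succ_le_of_lt hk)
  simp only [Nat.succ_eq_add_one, laTri] at this
  omega

theorem laTri_inj {i j a b : ℕ} (h : i < j) (h' : a < b) (e : laTri j + i = laTri b + a) :
    i = a ∧ j = b := by
  rcases lt_trichotomy j b with hj | hj | hj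
  · have := laTri_lt h hj; omega
  · subst hj; omega
  · have := laTri_lt h' hj; omega

theorem laTri_surj (N t : ℕ) (h : t < laTri N) : ∃ i j, i < j ∧ j < N ∧ laTri j + i = t := by
  induction N with
  | zero => simp [laTri] at h
  | succ N ih =>
    by_cases ht : t < laTri N
    · obtain ⟨i, j, h1, h2, h3⟩ := ih ht
      exact ⟨i, j, h1, by omega, h3⟩
    · simp only [laTri] at h
      exact ⟨t - laTri N, N, by omega, by omega, by omega⟩

theorem laX_lt {m n r J J' s : ℕ} (h : r < 2 * m) (hJ : J < J') : laX m n r J < laX m n s J' := by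
  have := laG_lt (n := n) (J := J) h
  unfold laX
  have : 2 * m * (J + 1) ≤ 2 * m * J' := Nat.mul_le_mul_left _ hJ
  rw [mul_add] at this
  omega

theorem laX_inj {m n r J J' s : ℕ} (h : r < 2 * m) (hs : s < 2 * m)
    (e : laX m n r J = laX m n s J') : r = s ∧ J = J' := by
  rcases lt_trichotomy J J' with hj | hj | hj
  · have := laX_lt (n := n) (s := s) h hj; omega
  · subst hj
    unfold laX at e
    exact ⟨laG_inj (n := n) (J := J) h hs (by omega), rfl⟩
  · have := laX_lt (n := n) (s := r) hs hj; omega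

theorem laX_range {m n r J : ℕ} (h : r < 2 * m) (hJ : J < 2 * n) :
    2 * m ≤ laX m n r J ∧ laX m n r J < 2 * m + 4 * m * n := by
  have h1 := laG_lt (n := n) (J := J) h
  have : 2 * m * (J + 1) ≤ 2 * m * (2 * n) := Nat.mul_le_mul_left _ hJ
  unfold laX
  constructor
  · omega
  · nlinarith

theorem laX_surj {m n t : ℕ} (h : 2 * m ≤ t) (h' : t < 2 * m + 4 * m * n) :
    ∃ r J, r < 2 * m ∧ J < 2 * n ∧ laX m n r J = t := by
  have hm : 0 < 2 * m := by
    rcases Nat.eq_zero_or_pos m with rfl | h0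
    · simp at h'
    · omega
  obtain ⟨r, hr, e⟩ := laG_surj (m := m) (n := n) (J := (t - 2 * m) / (2 * m))
    (Nat.mod_lt (t - 2 * m) hm)
  refine ⟨r, (t - 2 * m) / (2 * m), hr, ?_, ?_⟩
  · rw [Nat.div_lt_iff_lt_mul hm]
    have : 2 * n * (2 * m) = 4 * m * n := by ring
    omega
  · unfold laX
    rw [e]
    have := Nat.div_add_mod (t - 2 * m) (2 * m)
    omega

theorem laP_range {m r : ℕ} (h : r + 1 < 2 * m) : 1 ≤ laP m r ∧ laP m r < 2 * m := by
  unfold laP; split_ifs <;> omega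

theorem laP_inj {m r s : ℕ} (h : r + 1 < 2 * m) (h' : s + 1 < 2 * m) (e : laP m r = laP m s) :
    r = s := by
  unfold laP at e; split_ifs at e <;> omega

theorem laP_surj {m t : ℕ} (h : 1 ≤ t) (h' : t < 2 * m) : ∃ r, r + 1 < 2 * m ∧ laP m r = t := by
  by_cases ht : t < m
  · refine ⟨2 * (t - 1) + 1, by omega, ?_⟩
    unfold laP; split_ifs <;> omega
  · refine ⟨2 * (2 * m - 1 - t), by omega, ?_⟩
    unfold laP; split_ifs <;> omega

theorem la_arith (m a c k : ℕ) :
    (∑ x ∈ range k, (2 * m + 2 * m * (a + x) + c)) + m * k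
      = k * (2 * m + 2 * m * a + c) + m * k ^ 2 := by
  induction k with
  | zero => simp
  | succ k ih => rw [Finset.sum_range_succ]; linarith

theorem laX_row {m n r : ℕ} (hn : 1 ≤ n) (h : r < 2 * m) :
    (∑ J ∈ range (2 * n), laX m n r J) + laTau m (laRho m r) + n
      = n * (4 * m * n + 4 * m) + laRho m r := by
  obtain ⟨k, rfl⟩ : ∃ k, n = k + 1 := ⟨n - 1, by omega⟩
  have h1 := laRho_lt h
  have h3 := laTau_lt h1
  have e : 2 * (k + 1) = ((k + 1) + k) + 1 := by ring
  rw [e, Finset.sum_range_succ, Finset.sum_range_add]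
  have s1 : ∑ J ∈ range (k + 1), laX m (k + 1) r J
      = ∑ x ∈ range (k + 1), (2 * m + 2 * m * (0 + x) + laRho m r) := by
    apply Finset.sum_congr rfl
    intro J hJ
    have := Finset.mem_range.1 hJ
    simp [laX, laG, this]
  have s2 : ∑ J ∈ range k, laX m (k + 1) r (k + 1 + J)
      = ∑ x ∈ range k, (2 * m + 2 * m * ((k + 1) + x) + (2 * m - 1 - laRho m r)) := by
    apply Finset.sum_congr rfl
    intro J hJ
    have := Finset.mem_range.1 hJ
    unfold laX laG
    rw [if_neg (by omega), if_pos (by omega)]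
  have s3 : laX m (k + 1) r (k + 1 + k)
      = 2 * m + 2 * m * (k + 1 + k) + (2 * m - 1 - laTau m (laRho m r)) := by
    unfold laX laG
    rw [if_neg (by omega), if_neg (by omega)]
  have a1 := la_arith m 0 (laRho m r) (k + 1)
  have a2 := la_arith m (k + 1) (2 * m - 1 - laRho m r) k
  rw [← s1] at a1
  rw [← s2] at a2
  rw [s3]
  obtain ⟨u, hu⟩ : ∃ u, u + 1 + laRho m r = 2 * m := ⟨2 * m - 1 - laRho m r, by omega⟩
  obtain ⟨v, hv⟩ : ∃ v, v + 1 + laTau m (laRho m r) = 2 * m :=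
    ⟨2 * m - 1 - laTau m (laRho m r), by omega⟩
  have hu' : 2 * m - 1 - laRho m r = u := by omega
  have hv' : 2 * m - 1 - laTau m (laRho m r) = v := by omega
  rw [hu'] at a2
  rw [hv']
  have hu2 : k * (u + 1 + laRho m r) = k * (2 * m) := by rw [hu]
  nlinarith

/-- Symmetric labelling function on pairs of vertices. -/
def laF (m n : ℕ) : Fin (2 * m) ⊕ Fin (2 * n) → Fin (2 * m) ⊕ Fin (2 * n) → ℕ
  | Sum.inl a, Sum.inl b => laP m (min a.1 b.1)
  | Sum.inl a, Sum.inr J => laX m n a.1 J.1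
  | Sum.inr J, Sum.inl a => laX m n a.1 J.1
  | Sum.inr i, Sum.inr j => laK m n i.1 j.1

theorem laF_symm (m n : ℕ) (x y : Fin (2 * m) ⊕ Fin (2 * n)) : laF m n x y = laF m n y x := by
  rcases x with a | a <;> rcases y with b | b <;>
    simp [laF, laK, min_comm, max_comm]

/-- The labelling. -/
def laf (m n : ℕ) : Sym2 (Fin (2 * m) ⊕ Fin (2 * n)) → ℕ :=
  Sym2.lift ⟨laF m n, laF_symm m n⟩

theorem laf_mk (m n : ℕ) (x y : Fin (2 * m) ⊕ Fin (2 * n)) : laf m n s(x, y) = laF m n x y := rfl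

theorem joinG_ll {α β : Type*} (G : SimpleGraph α) (H : SimpleGraph β) (a b : α) :
    (joinG G H).Adj (Sum.inl a) (Sum.inl b) ↔ G.Adj a b := by
  simp [joinG, SimpleGraph.fromRel_adj, G.adj_comm b a]
  exact fun h => h.ne

theorem joinG_rr {α β : Type*} (G : SimpleGraph α) (H : SimpleGraph β) (a b : β) :
    (joinG G H).Adj (Sum.inr a) (Sum.inr b) ↔ H.Adj a b := by
  simp [joinG, SimpleGraph.fromRel_adj, H.adj_comm b a]
  exact fun h => h.ne

theorem joinG_lr {α β : Type*} (G : SimpleGraph α) (H : SimpleGraph β) (a : α) (b : β) :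
    (joinG G H).Adj (Sum.inl a) (Sum.inr b) := by
  simp [joinG, SimpleGraph.fromRel_adj]

theorem joinG_rl {α β : Type*} (G : SimpleGraph α) (H : SimpleGraph β) (a : α) (b : β) :
    (joinG G H).Adj (Sum.inr b) (Sum.inl a) := (joinG_lr G H a b).symm

theorem vertexWeight_eq {V : Type*} [Fintype V] (G : SimpleGraph V) (f : Sym2 V → ℕ) (x : V) :
    vertexWeight G f x = ∑ y, if G.Adj x y then f s(x, y) else 0 := by
  unfold vertexWeight
  rw [← Finset.sum_filter]
  symm
  apply Finset.sum_bij (fun y _ => s(x, y))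
  · intro y hy
    simpa using hy
  · intro a _ b _ e
    exact Sym2.congr_right.1 e
  · intro e he
    induction e using Sym2.ind with
    | _ a b =>
      simp only [Finset.mem_filter, SimpleGraph.mem_edgeFinset, SimpleGraph.mem_edgeSet,
        Sym2.mem_iff] at he
      obtain ⟨hab, rfl | rfl⟩ := he
      · exact ⟨b, by simpa using hab, rfl⟩
      · exact ⟨a, by simpa using hab.symm, Sym2.eq_swap⟩
  · intros; rfl

/-- The graph. -/
abbrev laGr (m n : ℕ) : SimpleGraph (Fin (2 * m) ⊕ Fin (2 * n)) :=
  joinG (pathGraph (2 * m)) (⊤ : SimpleGraph (Fin (2 * n)))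

theorem la_edge_cases {m n : ℕ} {e : Sym2 (Fin (2 * m) ⊕ Fin (2 * n))}
    (he : e ∈ (laGr m n).edgeSet) :
    (∃ a b : Fin (2 * m), a.1 + 1 = b.1 ∧ e = s(Sum.inl a, Sum.inl b) ∧ laf m n e = laP m a.1) ∨
    (∃ (a : Fin (2 * m)) (J : Fin (2 * n)), e = s(Sum.inl a, Sum.inr J) ∧
      laf m n e = laX m n a.1 J.1) ∨
    (∃ i j : Fin (2 * n), i.1 < j.1 ∧ e = s(Sum.inr i, Sum.inr j) ∧
      laf m n e = 2 * m + 4 * m * n + (laTri j.1 + i.1)) := by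
  induction e using Sym2.ind with
  | _ x y =>
    rw [SimpleGraph.mem_edgeSet] at he
    rcases x with a | a <;> rcases y with b | b
    · rw [joinG_ll, SimpleGraph.pathGraph_adj] at he
      left
      rcases he with h | h
      · exact ⟨a, b, h, rfl, by rw [laf_mk]; simp only [laF]; congr 1; omega⟩
      · exact ⟨b, a, h, Sym2.eq_swap, by rw [laf_mk]; simp only [laF]; congr 1; omega⟩
    · exact Or.inr (Or.inl ⟨a, b, rfl, rfl⟩)
    · exact Or.inr (Or.inl ⟨b, a, Sym2.eq_swap, rfl⟩)
    · rw [joinG_rr, SimpleGraph.top_adj] at he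
      right; right
      rcases lt_or_gt_of_ne (fun h => he (Fin.ext h)) with h | h
      · exact ⟨a, b, h, rfl, by
          rw [laf_mk]; simp only [laF, laK, max_eq_right h.le, min_eq_left h.le, add_assoc]⟩
      · exact ⟨b, a, h, Sym2.eq_swap, by
          rw [laf_mk]; simp only [laF, laK, max_eq_left h.le, min_eq_right h.le, add_assoc]⟩

theorem la_bij (m n : ℕ) (hm : 1 ≤ m) :
    Set.BijOn (laf m n) (laGr m n).edgeSet
      (Set.Icc 1 (2 * m - 1 + 4 * m * n + laTri (2 * n))) := by
  refine ⟨?_, ?_, ?_⟩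
  · intro e he
    rw [Set.mem_Icc]
    rcases la_edge_cases he with ⟨a, b, h, -, e1⟩ | ⟨a, J, -, e1⟩ | ⟨i, j, h, -, e1⟩
    · have := laP_range (m := m) (r := a.1) (by omega)
      omega
    · have := laX_range (m := m) (n := n) a.2 J.2
      omega
    · have := laTri_lt h j.2
      omega
  · intro e he e' he' eq
    rcases la_edge_cases he with ⟨a, b, h, e0, e1⟩ | ⟨a, J, e0, e1⟩ | ⟨i, j, h, e0, e1⟩ <;>
    rcases la_edge_cases he' with ⟨a', b', h', e0', e1'⟩ | ⟨a', J', e0', e1'⟩ |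
      ⟨i', j', h', e0', e1'⟩ <;> rw [e1, e1'] at eq
    · have := laP_inj (by omega) (by omega) eq
      have h1 : a = a' := Fin.ext this
      have h2 : b = b' := Fin.ext (by omega)
      rw [e0, e0', h1, h2]
    · have := laP_range (m := m) (r := a.1) (by omega)
      have := laX_range (m := m) (n := n) a'.2 J'.2
      omega
    · have := laP_range (m := m) (r := a.1) (by omega)
      omega
    · have := laP_range (m := m) (r := a'.1) (by omega)
      have := laX_range (m := m) (n := n) a.2 J.2
      omega
    · obtain ⟨h1, h2⟩ := laX_inj a.2 a'.2 eq
      rw [e0, e0', Fin.ext h1, Fin.ext h2]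
    · have := laX_range (m := m) (n := n) a.2 J.2
      omega
    · have := laP_range (m := m) (r := a'.1) (by omega)
      omega
    · have := laX_range (m := m) (n := n) a'.2 J'.2
      omega
    · obtain ⟨h1, h2⟩ := laTri_inj h h' (by omega)
      rw [e0, e0', Fin.ext h1, Fin.ext h2]
  · intro t ht
    rw [Set.mem_Icc] at ht
    by_cases h1 : t < 2 * m
    · obtain ⟨r, hr, e⟩ := laP_surj ht.1 h1
      refine ⟨s(Sum.inl ⟨r, by omega⟩, Sum.inl ⟨r + 1, hr⟩), ?_, ?_⟩
      · rw [SimpleGraph.mem_edgeSet, joinG_ll, SimpleGraph.pathGraph_adj]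
        left; rfl
      · rw [laf_mk]; simp [laF, e]
    · by_cases h2 : t < 2 * m + 4 * m * n
      · obtain ⟨r, J, hr, hJ, e⟩ := laX_surj (by omega) h2
        exact ⟨s(Sum.inl ⟨r, hr⟩, Sum.inr ⟨J, hJ⟩), joinG_lr _ _ _ _, e⟩
      · obtain ⟨i, j, hij, hj, e⟩ := laTri_surj (2 * n) (t - (2 * m + 4 * m * n)) (by omega)
        refine ⟨s(Sum.inr ⟨i, by omega⟩, Sum.inr ⟨j, hj⟩), ?_, ?_⟩
        · rw [SimpleGraph.mem_edgeSet, joinG_rr, SimpleGraph.top_adj]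
          intro h
          have := congrArg Fin.val h
          simp at this
          omega
        · rw [laf_mk]
          simp only [laF, laK, max_eq_right hij.le, min_eq_left hij.le]
          omega

theorem la_bij' (m n : ℕ) (hm : 1 ≤ m) :
    Set.BijOn (laf m n) (laGr m n).edgeSet (Set.Icc 1 (laGr m n).edgeSet.ncard) := by
  have h := la_bij m n hm
  have hc : (laGr m n).edgeSet.ncard = 2 * m - 1 + 4 * m * n + laTri (2 * n) := by
    rw [← h.injOn.ncard_image, h.image_eq, ← Finset.coe_Icc, Set.ncard_coe_finset]
    simp
  rw [hc]; exact h

theorem la_path_sum (m r : ℕ) (hr : r < 2 * m) :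
    (∑ b : Fin (2 * m), if (r + 1 = b.1 ∨ b.1 + 1 = r) then laP m (min r b.1) else 0)
      = (if r + 1 < 2 * m then laP m r else 0) + (if 1 ≤ r then laP m (r - 1) else 0) := by
  rw [Fin.sum_univ_eq_sum_range (fun b => if (r + 1 = b ∨ b + 1 = r) then laP m (min r b) else 0)]
  have : ∀ b ∈ range (2 * m), (if (r + 1 = b ∨ b + 1 = r) then laP m (min r b) else 0)
      = (if r + 1 = b then laP m r else 0) +
        (if r - 1 = b then (if 1 ≤ r then laP m (r - 1) else 0) else 0) := by
    intro b _
    by_cases h1 : r + 1 = b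
    · subst h1
      rw [if_pos (Or.inl rfl), if_pos rfl, if_neg (by omega)]
      simp
    · rw [if_neg h1]
      by_cases h2 : b + 1 = r
      · subst h2
        simp
      · rw [if_neg (by omega)]
        split_ifs <;> omega
  rw [Finset.sum_congr rfl this, Finset.sum_add_distrib, Finset.sum_ite_eq, Finset.sum_ite_eq]
  simp only [Finset.mem_range]
  rw [if_pos (show r - 1 < 2 * m by omega)]

theorem la_row_fix (m r : ℕ) (hr : r < 2 * m) :
    laTau m (laRho m r) + (if r % 2 = 0 then 2 * m - 2 else 2 * m)
      = (if r + 1 < 2 * m then laP m r else 0) + (if 1 ≤ r then laP m (r - 1) else 0)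
        + laRho m r := by
  obtain ⟨k, rfl | rfl⟩ : ∃ k, r = 2 * k ∨ r = 2 * k + 1 := ⟨r / 2, by omega⟩
  · have e1 : laRho m (2 * k) = k := by unfold laRho; split_ifs <;> omega
    have e2 : laP m (2 * k) = 2 * m - 1 - k := by unfold laP; split_ifs <;> omega
    have e3 : 1 ≤ 2 * k → laP m (2 * k - 1) = k := by
      intro h; unfold laP; split_ifs <;> omega
    rw [e1, e2]
    unfold laTau
    split_ifs with h1 h2 h3 <;> first | omega | (rw [e3 (by omega)]; omega)
  · have e1 : laRho m (2 * k + 1) = 2 * m - 1 - k := by unfold laRho; split_ifs <;> omega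
    have e2 : laP m (2 * k + 1) = k + 1 := by unfold laP; split_ifs <;> omega
    have e3 : laP m (2 * k + 1 - 1) = 2 * m - 1 - k := by unfold laP; split_ifs <;> omega
    rw [e1, e2, e3]
    unfold laTau
    split_ifs <;> omega

theorem la_w_inl (m n : ℕ) (hn : 1 ≤ n) (a : Fin (2 * m)) :
    vertexWeight (laGr m n) (laf m n) (Sum.inl a) + n
      = n * (4 * m * n + 4 * m) + (if a.1 % 2 = 0 then 2 * m - 2 else 2 * m) := by
  rw [vertexWeight_eq, Fintype.sum_sum_type]
  simp only [joinG_ll, joinG_lr, if_true, laf_mk, laF, SimpleGraph.pathGraph_adj]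
  have h1 := la_path_sum m a.1 a.2
  have h2 := laX_row hn a.2
  rw [Fin.sum_univ_eq_sum_range (fun J => laX m n a.1 J)]
  have h3 : laTau m (laRho m a.1) + (if a.1 % 2 = 0 then 2 * m - 2 else 2 * m)
      = (if a.1 + 1 < 2 * m then laP m a.1 else 0) + (if 1 ≤ a.1 then laP m (a.1 - 1) else 0)
        + laRho m a.1 := by
    exact la_row_fix m a.1 a.2
  convert_to (∑ b : Fin (2 * m), if (a.1 + 1 = b.1 ∨ b.1 + 1 = a.1) then laP m (min a.1 b.1) else 0)
    + _ + n = _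
  rw [h1]
  omega

/-- Complete graph part of the weight. -/
def laH (m n : ℕ) (J k : Fin (2 * n)) : ℕ := if J ≠ k then laK m n J.1 k.1 else 0

theorem la_w_inr (m n : ℕ) (J : Fin (2 * n)) :
    vertexWeight (laGr m n) (laf m n) (Sum.inr J)
      = (∑ r : Fin (2 * m), laX m n r.1 J.1) + ∑ k, laH m n J k := by
  rw [vertexWeight_eq, Fintype.sum_sum_type]
  simp only [joinG_rr, joinG_rl, if_true, laf_mk, laF, SimpleGraph.top_adj]
  congr 1

theorem laK_mono {m n i j k : ℕ} (h : i < j) (hk : k ≠ i) (hk' : k ≠ j) :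
    laK m n i k ≤ laK m n j k := by
  unfold laK
  have h1 : laTri (max i k) ≤ laTri (max j k) := laTri_mono (by omega)
  have h2 : min i k ≤ min j k := by omega
  omega

theorem laH_mono {m n : ℕ} {i j : Fin (2 * n)} (h : i < j) :
    ∑ k, laH m n i k ≤ ∑ k, laH m n j k := by
  rw [← Equiv.sum_comp (Equiv.swap i j)]
  apply Finset.sum_le_sum
  intro k _
  by_cases h1 : k = i
  · subst h1
    rw [Equiv.swap_apply_left]
    simp [laH, h.ne, h.ne', laK, max_comm, min_comm]
  · by_cases h2 : k = j
    · subst h2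
      rw [Equiv.swap_apply_right]
      simp [laH]
    · rw [Equiv.swap_apply_of_ne_of_ne h1 h2]
      unfold laH
      rw [if_pos (Ne.symm h1), if_pos (Ne.symm h2)]
      exact laK_mono h (fun e => h1 (Fin.ext e)) (fun e => h2 (Fin.ext e))

theorem la_w_inr_lt {m n : ℕ} (hm : 1 ≤ m) {i j : Fin (2 * n)} (h : i < j) :
    vertexWeight (laGr m n) (laf m n) (Sum.inr i) <
      vertexWeight (laGr m n) (laf m n) (Sum.inr j) := by
  rw [la_w_inr, la_w_inr]
  apply add_lt_add_of_lt_of_le _ (laH_mono h)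
  apply Finset.sum_lt_sum_of_nonempty
  · exact ⟨⟨0, by omega⟩, Finset.mem_univ _⟩
  · intro r _
    exact laX_lt r.2 h

theorem la_w_inr_ge (m n : ℕ) (J : Fin (2 * n)) :
    2 * m * (2 * m) + (2 * n - 1) * (2 * m + 4 * m * n) ≤
      vertexWeight (laGr m n) (laf m n) (Sum.inr J) := by
  rw [la_w_inr]
  apply add_le_add
  · have := Finset.card_nsmul_le_sum (Finset.univ : Finset (Fin (2 * m)))
      (fun r => laX m n r.1 J.1) (2 * m) (fun r _ => (laX_range r.2 J.2).1)
    simpa using this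
  · have h1 : ∑ k ∈ Finset.univ.erase J, laH m n J k ≤ ∑ k, laH m n J k :=
      Finset.sum_le_sum_of_subset (Finset.erase_subset _ _)
    refine le_trans ?_ h1
    have := Finset.card_nsmul_le_sum (Finset.univ.erase J)
      (fun k => laH m n J k) (2 * m + 4 * m * n) (by
        intro k hk
        have hk' := Finset.ne_of_mem_erase hk
        unfold laH
        rw [if_pos (Ne.symm hk')]
        unfold laK
        omega)
    simpa [Finset.card_erase_of_mem] using this

theorem la_w_inl_lt_inr (m n : ℕ) (hm : 1 ≤ m) (hn : 1 ≤ n) (a : Fin (2 * m)) (J : Fin (2 * n)) :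
    vertexWeight (laGr m n) (laf m n) (Sum.inl a) <
      vertexWeight (laGr m n) (laf m n) (Sum.inr J) := by
  refine lt_of_lt_of_le ?_ (la_w_inr_ge m n J)
  have h := la_w_inl m n hn a
  have h' : vertexWeight (laGr m n) (laf m n) (Sum.inl a) + n
      ≤ n * (4 * m * n + 4 * m) + 2 * m := by
    rw [h]; split_ifs <;> omega
  obtain ⟨k, rfl⟩ : ∃ k, n = k + 1 := ⟨n - 1, by omega⟩
  obtain ⟨l, rfl⟩ : ∃ l, m = l + 1 := ⟨m - 1, by omega⟩
  have e : 2 * (k + 1) - 1 = 2 * k + 1 := by omega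
  rw [e]
  have p1 : 0 ≤ l * k := Nat.zero_le _
  have p2 : 0 ≤ l * k ^ 2 := Nat.zero_le _
  nlinarith

theorem la_isLocal (m n : ℕ) (hm : 1 ≤ m) (hn : 1 ≤ n) :
    IsLocalAntimagic (laGr m n) (laf m n) := by
  refine ⟨la_bij' m n hm, ?_⟩
  intro x y hxy
  rcases x with a | a <;> rcases y with b | b
  · rw [joinG_ll, SimpleGraph.pathGraph_adj] at hxy
    have h1 := la_w_inl m n hn a
    have h2 := la_w_inl m n hn b
    intro e
    rw [e, h2] at h1
    split_ifs at h1 <;> omega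
  · exact (la_w_inl_lt_inr m n hm hn a b).ne
  · exact (la_w_inl_lt_inr m n hm hn b a).ne'
  · rw [joinG_rr, SimpleGraph.top_adj] at hxy
    rcases lt_or_gt_of_ne hxy with h | h
    · exact (la_w_inr_lt hm h).ne
    · exact (la_w_inr_lt hm h).ne'

theorem la_count_le (m n : ℕ) (hn : 1 ≤ n) :
    colorCount (laGr m n) (laf m n) ≤ 2 * n + 2 := by
  unfold colorCount
  have hs : Finset.univ.image (vertexWeight (laGr m n) (laf m n)) ⊆
      (Finset.univ.image fun J : Fin (2 * n) => vertexWeight (laGr m n) (laf m n) (Sum.inr J)) ∪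
      {n * (4 * m * n + 4 * m) + (2 * m - 2) - n, n * (4 * m * n + 4 * m) + 2 * m - n} := by
    intro w hw
    obtain ⟨x, -, rfl⟩ := Finset.mem_image.1 hw
    rcases x with a | J
    · apply Finset.mem_union_right
      have h := la_w_inl m n hn a
      simp only [Finset.mem_insert, Finset.mem_singleton]
      split_ifs at h <;> omega
    · exact Finset.mem_union_left _ (Finset.mem_image_of_mem _ (Finset.mem_univ J))
  refine (Finset.card_le_card hs).trans ((Finset.card_union_le _ _).trans ?_)
  have h1 := Finset.card_image_le (s := (Finset.univ : Finset (Fin (2 * n))))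
    (f := fun J => vertexWeight (laGr m n) (laf m n) (Sum.inr J))
  rw [Finset.card_univ, Fintype.card_fin] at h1
  exact add_le_add h1 Finset.card_le_two

theorem la_count_ge (m n : ℕ) (hm : 1 ≤ m) (f : Sym2 (Fin (2 * m) ⊕ Fin (2 * n)) → ℕ)
    (hf : IsLocalAntimagic (laGr m n) f) : 2 * n + 2 ≤ colorCount (laGr m n) f := by
  unfold colorCount
  let φ : Fin 2 ⊕ Fin (2 * n) → Fin (2 * m) ⊕ Fin (2 * n) :=
    Sum.map (Fin.castLE (by omega)) id
  have hi : Function.Injective (fun x => vertexWeight (laGr m n) f (φ x)) := by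
    intro x y e
    by_contra hne
    refine hf.2 ?_ e
    rcases x with a | a <;> rcases y with b | b <;>
      simp only [φ, Sum.map_inl, Sum.map_inr, id]
    · rw [joinG_ll, SimpleGraph.pathGraph_adj]
      have : a.1 ≠ b.1 := fun h => hne (by rw [Fin.ext h])
      simp only [Fin.val_castLE]
      omega
    · exact joinG_lr _ _ _ _
    · exact joinG_rl _ _ _ _
    · rw [joinG_rr, SimpleGraph.top_adj]
      rintro rfl
      exact hne rfl
  have hc := Finset.card_image_of_injective Finset.univ hi
  rw [Finset.card_univ, Fintype.card_sum, Fintype.card_fin, Fintype.card_fin] at hc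
  rw [add_comm, ← hc]
  apply Finset.card_le_card
  intro w hw
  obtain ⟨x, -, rfl⟩ := Finset.mem_image.1 hw
  exact Finset.mem_image_of_mem _ (Finset.mem_univ _)

/-- Theorem: For all integers `m, n ≥ 1`, `χ_la(P_{2m} ∨ K_{2n}) = 2n + 2`. -/
theorem chiLA_path_join_completeEven (m n : ℕ) (hm : 1 ≤ m) (hn : 1 ≤ n) :
    chiLA (joinG (pathGraph (2 * m)) (⊤ : SimpleGraph (Fin (2 * n)))) = 2 * n + 2 := by
  have hmem : 2 * n + 2 ∈ { k | ∃ f : Sym2 (Fin (2 * m) ⊕ Fin (2 * n)) → ℕ,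
      IsLocalAntimagic (laGr m n) f ∧ colorCount (laGr m n) f = k } :=
    ⟨laf m n, la_isLocal m n hm hn, le_antisymm (la_count_le m n hn)
      (la_count_ge m n hm _ (la_isLocal m n hm hn))⟩
  apply le_antisymm
  · exact Nat.sInf_le hmem
  · apply le_csInf ⟨_, hmem⟩
    rintro k ⟨f, hf, rfl⟩
    exact la_count_ge m n hm f hf
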